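/- arXiv:2403.18138 — 3 statements merged into one kernel-verified Lean document; each statement's English description precedes it below -/
import Mathlib

section
/- Let $k$ be an algebraically closed field of characteristic $0$, $G$ a group, and $\rho, \rho'\colon G \to \mathrm{GL}_2(k)$ two representations with $\det \rho(g) = \det \rho'(g) = 1$ for all $g$, with $\rho$ irreducible. If the symmetric squares $\mathrm{Sym}^2 \rho$ and $\mathrm{Sym}^2 \rho'$ are isomorphic as representations of $G$, then there exists a character $\chi\colon G \to k^{\times}$ with $\chi^2 = 1$ such that $\rho'$ is isomorphic to $\chi \otimes \rho$. -/
/-- The second symmetric power of a `2 × 2` matrix `g`, i.e. the matrix of the induced action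
on `Sym²(k²)` in the basis `e₁², e₁e₂, e₂²` (where `g e₁ = g₀₀ e₁ + g₁₀ e₂`,
`g e₂ = g₀₁ e₁ + g₁₁ e₂`). -/
def sym2Mat {k : Type*} [CommRing k] (g : Matrix (Fin 2) (Fin 2) k) :
    Matrix (Fin 3) (Fin 3) k :=
  Matrix.of
    ![![g 0 0 ^ 2, g 0 0 * g 0 1, g 0 1 ^ 2],
      ![2 * g 0 0 * g 1 0, g 0 0 * g 1 1 + g 0 1 * g 1 0, 2 * g 0 1 * g 1 1],
      ![g 1 0 ^ 2, g 1 0 * g 1 1, g 1 1 ^ 2]]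

open Matrix in
lemma exists_sqrt_aux {k : Type*} [Field k] [IsAlgClosed k] [CharZero k]
    (A : Matrix (Fin 3) (Fin 3) k) (hA : A.det ≠ 0) :
    ∃ (S : Matrix (Fin 3) (Fin 3) k) (a b c : k), IsUnit (A + a • (1 : Matrix (Fin 3) (Fin 3) k)) ∧
      S * (A + a • (1 : Matrix (Fin 3) (Fin 3) k)) = b • A + c • (1 : Matrix (Fin 3) (Fin 3) k) ∧
      S * S = A := by
  have hsp := IsAlgClosed.splits A.charpoly
  have hcard : A.charpoly.roots.card = 3 := by
    rw [← hsp.natDegree_eq_card_roots, Matrix.charpoly_natDegree_eq_dim]; simp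
  obtain ⟨a, b, c, habc⟩ := Multiset.card_eq_three.mp hcard
  have hprod := hsp.eq_prod_roots_of_monic A.charpoly_monic
  have hd := Matrix.det_eq_prod_roots_charpoly (A := A)
  rw [habc] at hprod hd
  simp at hprod hd
  have hCH := A.aeval_self_charpoly
  rw [hprod] at hCH
  simp only [map_mul, map_sub, Polynomial.aeval_X, Polynomial.aeval_C] at hCH
  have hev := fun t => A.eval_charpoly t
  rw [hprod] at hev
  simp at hev
  rw [hd] at hA
  have ha : a ≠ 0 := by rintro rfl; simp at hA
  have hb : b ≠ 0 := by rintro rfl; simp at hA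
  have hc : c ≠ 0 := by rintro rfl; simp at hA
  choose r hr using fun x : k => IsAlgClosed.exists_eq_mul_self x
  have key : ∀ x y, x ≠ 0 → r x + r y ≠ 0 := by
    intro x y hx h
    have h1 : r x = - r y := by linear_combination h
    have h2 : x = y := by rw [hr x, hr y, h1]; ring
    subst h2
    have : r x = 0 := by
      have : (2 : k) * r x = 0 := by linear_combination h
      simpa using this
    exact hx (by rw [hr x, this]; ring)
  have ka := hr a
  have kb := hr b
  have kc := hr c
  have hab := key a b ha
  have hac := key a c ha
  have hbc := key b c hb
  generalize r a = α at *
  generalize r b = β at *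
  generalize r c = γ at *
  subst ka kb kc
  set s1 := α + β + γ with hs1
  set s2 := α * β + β * γ + γ * α with hs2
  set s3 := α * β * γ with hs3
  set T : Matrix (Fin 3) (Fin 3) k := A + s2 • 1 with hT
  set L : Matrix (Fin 3) (Fin 3) k := s1 • A + s3 • 1 with hL
  have hTu : IsUnit T := by
    rw [Matrix.isUnit_iff_isUnit_det, isUnit_iff_ne_zero]
    have h := hev (-s2)
    have e : (Matrix.scalar (Fin 3) (-s2) - A) = -T := by
      rw [hT, Matrix.scalar_apply, ← Matrix.smul_one_eq_diagonal, neg_smul]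
      abel
    intro h0
    have h' : (-s2 - α*α) * ((-s2 - β*β) * (-s2 - γ*γ)) = 0 := by
      have : (-T).det = 0 := by rw [Matrix.det_neg, h0]; simp
      rw [← e] at this
      rw [← this, h, Matrix.scalar_apply]
    have h2 : ((α+β)*(α+γ)*(β+γ))^2 = 0 := by
      rw [hs2] at h'
      linear_combination -h'
    simp [hab, hac, hbc] at h2
  have hTL : T * L = L * T := by
    rw [hT, hL]
    simp only [mul_add, add_mul, smul_mul_assoc, mul_smul_comm, mul_one, one_mul]
    module
  have hLL : L * L = A * T * T := by
    have e : ∀ x : k, algebraMap k (Matrix (Fin 3) (Fin 3) k) x = x • 1 :=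
      fun x => Algebra.algebraMap_eq_smul_one x
    simp only [e] at hCH
    rw [hT, hL]
    simp only [mul_add, add_mul, mul_sub, sub_mul, smul_mul_assoc, mul_smul_comm, mul_one, one_mul,
      smul_smul, mul_assoc, smul_add, smul_sub] at hCH ⊢
    rw [← sub_eq_zero, ← neg_eq_zero, ← hCH, hs1, hs2, hs3]
    module
  obtain ⟨U, hU⟩ := hTu
  have hTi : T * (↑U⁻¹ : Matrix (Fin 3) (Fin 3) k) = 1 := by rw [← hU]; simp
  have hiT : (↑U⁻¹ : Matrix (Fin 3) (Fin 3) k) * T = 1 := by rw [← hU]; simp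
  generalize (↑U⁻¹ : Matrix (Fin 3) (Fin 3) k) = V at *
  refine ⟨L * V, s2, s1, s3, ⟨U, hU⟩, by rw [mul_assoc, hiT, mul_one], ?_⟩
  have hVL : V * L = L * V := by
    calc V * L = V * (L * T) * V := by rw [mul_assoc, mul_assoc, hTi, mul_one]
      _ = L * V := by rw [← hTL, ← mul_assoc, hiT, one_mul]
  calc L * V * (L * V) = L * (V * L) * V := by noncomm_ring
    _ = (L * L) * V * V := by rw [hVL]; noncomm_ring
    _ = A * (T * (T * V) * V) := by rw [hLL]; noncomm_ring
    _ = A := by rw [hTi, mul_one, hTi, mul_one]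

lemma sym2Mat_mul {k : Type*} [CommRing k] (g h : Matrix (Fin 2) (Fin 2) k) :
    sym2Mat (g * h) = sym2Mat g * sym2Mat h := by
  ext i j
  fin_cases i <;> fin_cases j <;>
    simp [sym2Mat, Matrix.mul_apply, Fin.sum_univ_succ] <;> ring

lemma sym2Mat_one {k : Type*} [CommRing k] :
    sym2Mat (1 : Matrix (Fin 2) (Fin 2) k) = 1 := by
  ext i j
  fin_cases i <;> fin_cases j <;> simp [sym2Mat]

/-- The discriminant form on the symmetric square. -/
def discForm (k : Type*) [CommRing k] : Matrix (Fin 3) (Fin 3) k :=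
  Matrix.of ![![0, 0, -2], ![0, 1, 0], ![-2, 0, 0]]

open Matrix in
lemma sym2Mat_disc {k : Type*} [CommRing k] (g : Matrix (Fin 2) (Fin 2) k) (hg : g.det = 1) :
    (sym2Mat g)ᵀ * discForm k * sym2Mat g = discForm k := by
  have h2 : (g 0 0 * g 1 1 - g 0 1 * g 1 0) = 1 := by rw [← hg, Matrix.det_fin_two]
  have h : (g 0 0 * g 1 1 - g 0 1 * g 1 0)^2 = 1 := by rw [h2]; ring
  ext i j
  fin_cases i <;> fin_cases j <;>
    simp [sym2Mat, discForm, Matrix.mul_apply, Fin.sum_univ_succ] <;>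
    first | ring1 | linear_combination h | linear_combination (-2) * h

open Matrix in
lemma exists_sym2_of_orth {k : Type*} [Field k] [IsAlgClosed k] [CharZero k]
    (P : Matrix (Fin 3) (Fin 3) k) (hP : Pᵀ * discForm k * P = discForm k) :
    ∃ Q : Matrix (Fin 2) (Fin 2) k, sym2Mat Q = P := by
  have isol : ∀ x y z : k, y * y = 4 * x * z → ∃ p q : k, x = p^2 ∧ y = 2*p*q ∧ z = q^2 := by
    intro x y z h
    obtain ⟨p, hp⟩ := IsAlgClosed.exists_eq_mul_self x
    obtain ⟨q, hq⟩ := IsAlgClosed.exists_eq_mul_self z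
    have : (y - 2*p*q) * (y + 2*p*q) = 0 := by rw [hp, hq] at h; linear_combination h
    rcases mul_eq_zero.mp this with h | h
    · exact ⟨p, q, by rw [hp]; ring, by linear_combination h, by rw [hq]; ring⟩
    · exact ⟨p, -q, by rw [hp]; ring, by linear_combination h, by rw [hq]; ring⟩
  have e := fun i j => congrFun (congrFun hP i) j
  simp [discForm, Matrix.mul_apply, Fin.sum_univ_succ] at e
  have e00 := e 0 0
  have e22 := e 2 2
  have e02 := e 0 2
  have e01 := e 0 1
  have e21 := e 2 1
  have e11 := e 1 1
  simp at e00 e22 e02 e01 e21 e11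
  clear e
  obtain ⟨p, q, h1, h2, h3⟩ := isol (P 0 0) (P 1 0) (P 2 0) (by linear_combination e00)
  obtain ⟨s, t, h4, h5, h6⟩ := isol (P 0 2) (P 1 2) (P 2 2) (by linear_combination e22)
  rw [h1, h2, h3] at e01
  rw [h4, h5, h6] at e21
  rw [h1, h2, h3, h4, h5, h6] at e02
  have hD2 : (p * t - q * s) ^ 2 = 1 := by
    have : (2:k) * ((p * t - q * s) ^ 2 - 1) = 0 := by linear_combination -e02
    have := (mul_eq_zero.mp this).resolve_left two_ne_zero
    linear_combination this
  have hmain : (P 0 1 = p * s ∧ P 1 1 = p * t + q * s ∧ P 2 1 = q * t) ∨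
      (P 0 1 = -(p * s) ∧ P 1 1 = -(p * t + q * s) ∧ P 2 1 = -(q * t)) := by
    generalize P 0 1 = x at *
    generalize P 1 1 = y at *
    generalize P 2 1 = z at *
    -- orthogonality to both squares
    have f1 : 2 * (p * q * y - p^2 * z - q^2 * x) = 0 := by linear_combination e01
    have f2 : 2 * (s * t * y - s^2 * z - t^2 * x) = 0 := by linear_combination e21
    have f1 := (mul_eq_zero.mp f1).resolve_left two_ne_zero
    have f2 := (mul_eq_zero.mp f2).resolve_left two_ne_zero
    have f3 : y^2 - 4 * x * z = 1 := by linear_combination e11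
    obtain ⟨l, hl⟩ : ∃ l, l = y * (p * t + q * s) - 2 * x * q * t - 2 * z * p * s := ⟨_, rfl⟩
    have g1 : x = l * (p * s) := by
      rw [hl]; linear_combination -(s^2 * f1 + p^2 * f2) - x * hD2
    have g2 : y = l * (p * t + q * s) := by
      rw [hl]; linear_combination -(2 * s * t * f1 + 2 * p * q * f2) - y * hD2
    have g3 : z = l * (q * t) := by
      rw [hl]; linear_combination -(t^2 * f1 + q^2 * f2) - z * hD2
    clear hl
    have hl2 : (l - 1) * (l + 1) = 0 := by
      rw [g1, g2, g3] at f3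
      linear_combination f3 - l^2 * hD2
    rcases mul_eq_zero.mp hl2 with h | h
    · left
      have : l = 1 := by linear_combination h
      rw [g1, g2, g3, this]; simp
    · right
      have : l = -1 := by linear_combination h
      rw [g1, g2, g3, this]; simp only [neg_mul, one_mul]; exact ⟨trivial, trivial, trivial⟩
  rcases hmain with ⟨h7, h8, h9⟩ | ⟨h7, h8, h9⟩
  · refine ⟨!![p, s; q, t], ?_⟩
    ext i j
    fin_cases i <;> fin_cases j <;> simp [sym2Mat, h1, h2, h3, h4, h5, h6, h7, h8, h9] <;> ring
  · refine ⟨!![p, -s; q, -t], ?_⟩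
    ext i j
    fin_cases i <;> fin_cases j <;> simp [sym2Mat, h1, h2, h3, h4, h5, h6, h7, h8, h9] <;> ring

lemma sym2Mat_eq_one {k : Type*} [Field k] [CharZero k] (Z : Matrix (Fin 2) (Fin 2) k)
    (h : sym2Mat Z = 1) : ∃ c : kˣ, c * c = 1 ∧ Z = (c : k) • (1 : Matrix (Fin 2) (Fin 2) k) := by
  have e := fun i j => congrFun (congrFun h i) j
  have e00 := e 0 0
  have e02 := e 0 2
  have e20 := e 2 0
  have e11 := e 1 1
  simp [sym2Mat] at e00 e02 e20 e11
  rw [e02, e20] at e11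
  simp at e11
  have hZ : Z 1 1 = Z 0 0 := by
    rcases e00 with h | h <;> rw [h] at e11 ⊢
    · linear_combination e11
    · linear_combination -e11
  have h1 : Z 0 0 * Z 0 0 = 1 := by rw [hZ] at e11; exact e11
  refine ⟨⟨Z 0 0, Z 0 0, h1, h1⟩, ?_, ?_⟩
  · ext; exact h1
  · ext i j
    fin_cases i <;> fin_cases j <;> simp [e02, e20, hZ]

open Matrix in
lemma exists_orth {k G : Type*} [Field k] [IsAlgClosed k] [CharZero k]
    (X Y : G → Matrix (Fin 3) (Fin 3) k)
    (hX : ∀ g, (X g)ᵀ * discForm k * X g = discForm k)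
    (hY : ∀ g, (Y g)ᵀ * discForm k * Y g = discForm k)
    (P : Matrix (Fin 3) (Fin 3) k) (hP : IsUnit P) (h : ∀ g, X g * P = P * Y g) :
    ∃ P' : Matrix (Fin 3) (Fin 3) k, P'ᵀ * discForm k * P' = discForm k ∧
      ∀ g, X g * P' = P' * Y g := by
  have hBt : (discForm k)ᵀ = discForm k := by
    ext i j; fin_cases i <;> fin_cases j <;> simp [discForm]
  have hBu : IsUnit (discForm k) := by
    rw [Matrix.isUnit_iff_isUnit_det, isUnit_iff_ne_zero]
    simp [discForm, Matrix.det_fin_three]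
  set B := discForm k
  obtain ⟨U, hU⟩ := id hBu
  have hBi : B * (↑U⁻¹ : Matrix (Fin 3) (Fin 3) k) = 1 := by rw [← hU]; simp
  generalize (↑U⁻¹ : Matrix (Fin 3) (Fin 3) k) = V at *
  have hVu : IsUnit V := by
    rw [Matrix.isUnit_iff_isUnit_det]
    exact IsUnit.of_mul_eq_one_right B.det (by rw [← Matrix.det_mul, hBi, det_one])
  have hPt : IsUnit Pᵀ := by simpa using hP
  set A := V * (Pᵀ * B * P) with hA
  have hBA : B * A = Pᵀ * B * P := by rw [hA, ← mul_assoc, hBi, one_mul]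
  have hAu : IsUnit A := hVu.mul ((hPt.mul hBu).mul hP)
  have hAt : Aᵀ * B = B * A := by
    have : (B * A)ᵀ = B * A := by rw [hBA]; simp [hBt, mul_assoc]
    rw [← this, transpose_mul B A, hBt]
  have hAY : ∀ g, A * Y g = Y g * A := by
    intro g
    have hu : IsUnit ((Y g)ᵀ * B) := by
      have := hY g
      rw [Matrix.isUnit_iff_isUnit_det]
      have h2 : IsUnit ((Y g)ᵀ * B * Y g).det := by
        rw [this]; exact (Matrix.isUnit_iff_isUnit_det _).mp hBu
      rw [det_mul] at h2
      exact isUnit_of_mul_isUnit_left h2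
    apply hu.mul_left_cancel
    calc (Y g)ᵀ * B * (A * Y g) = (Y g)ᵀ * (B * A) * Y g := by noncomm_ring
      _ = (P * Y g)ᵀ * B * (P * Y g) := by rw [hBA, transpose_mul]; noncomm_ring
      _ = Pᵀ * ((X g)ᵀ * B * X g) * P := by rw [← h g, transpose_mul]; noncomm_ring
      _ = B * A := by rw [hX, hBA]
      _ = (Y g)ᵀ * B * (Y g * A) := by rw [← mul_assoc _ (Y g) A, hY]
  obtain ⟨S, a, b, c, hTu, hST, hSS⟩ := exists_sqrt_aux A
    (((Matrix.isUnit_iff_isUnit_det _).mp hAu).ne_zero)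
  have hSu : IsUnit S := by
    rw [← hSS] at hAu
    rw [Matrix.isUnit_iff_isUnit_det] at hAu ⊢
    rw [det_mul] at hAu
    exact isUnit_of_mul_isUnit_left hAu
  have hSY : ∀ g, S * Y g = Y g * S := by
    intro g
    apply hTu.mul_right_cancel
    rw [mul_assoc (Y g), hST]
    have e1 : Y g * (A + a • 1) = (A + a • 1) * Y g := by
      simp [mul_add, add_mul, hAY]
    rw [mul_assoc, e1, ← mul_assoc, hST]
    simp [mul_add, add_mul, hAY]
  have hSB : Sᵀ * B = B * S := by
    apply hTu.mul_right_cancel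
    rw [mul_assoc B, hST]
    have e1 : B * (A + a • 1) = (A + a • 1)ᵀ * B := by
      simp [mul_add, add_mul, hAt]
    rw [mul_assoc, e1, ← mul_assoc, ← transpose_mul]
    have e2 : (A + a • 1) * S = b • A + c • 1 := by
      rw [← hST, mul_add, add_mul]
      simp only [mul_smul_comm, smul_mul_assoc, mul_one, one_mul]
      congr 1
      rw [← hSS, mul_assoc]
    rw [e2]
    simp [mul_add, add_mul, hAt]
  obtain ⟨W, hW⟩ := hSu
  have hSi : S * (↑W⁻¹ : Matrix (Fin 3) (Fin 3) k) = 1 := by rw [← hW]; simp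
  have hiS : (↑W⁻¹ : Matrix (Fin 3) (Fin 3) k) * S = 1 := by rw [← hW]; simp
  generalize (↑W⁻¹ : Matrix (Fin 3) (Fin 3) k) = R at *
  refine ⟨P * R, ?_, ?_⟩
  · calc (P * R)ᵀ * B * (P * R) = Rᵀ * (Pᵀ * B * P) * R := by rw [transpose_mul]; noncomm_ring
      _ = Rᵀ * (B * S) * (S * R) := by rw [← hBA, ← hSS]; noncomm_ring
      _ = (S * R)ᵀ * B := by rw [← hSB, transpose_mul, hSi, mul_one, mul_assoc]
      _ = B := by rw [hSi]; simp
  · intro g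
    have : Y g * R = R * Y g := by
      calc Y g * R = R * (S * Y g) * R := by rw [← mul_assoc R, hiS, one_mul]
        _ = R * Y g * (S * R) := by rw [hSY]; noncomm_ring
        _ = R * Y g := by rw [hSi, mul_one]
    rw [← mul_assoc, h, mul_assoc, this, mul_assoc]

/-- If `ρ, ρ' : G → GL₂(k)` have trivial determinant, `ρ` is irreducible, and
`Sym² ρ ≅ Sym² ρ'`, then `ρ' ≅ χ ⊗ ρ` for some character `χ` with `χ² = 1`. -/
theorem stmt_6 {k G : Type*} [Field k] [IsAlgClosed k] [CharZero k] [Group G]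
    (ρ ρ' : G →* Matrix.GeneralLinearGroup (Fin 2) k)
    (hdet : ∀ g : G, (ρ g : Matrix (Fin 2) (Fin 2) k).det = 1)
    (hdet' : ∀ g : G, (ρ' g : Matrix (Fin 2) (Fin 2) k).det = 1)
    (hirr : ∀ W : Submodule k (Fin 2 → k),
      (∀ g : G, ∀ v ∈ W, (ρ g : Matrix (Fin 2) (Fin 2) k).mulVec v ∈ W) → W = ⊥ ∨ W = ⊤)
    (hiso : ∃ P : Matrix (Fin 3) (Fin 3) k, IsUnit P ∧
      ∀ g : G, sym2Mat (ρ g : Matrix (Fin 2) (Fin 2) k) * P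
        = P * sym2Mat (ρ' g : Matrix (Fin 2) (Fin 2) k)) :
    ∃ χ : G →* kˣ, (∀ g : G, χ g * χ g = 1) ∧
      ∃ Q : Matrix (Fin 2) (Fin 2) k, IsUnit Q ∧
        ∀ g : G, (ρ' g : Matrix (Fin 2) (Fin 2) k) * Q
          = Q * ((χ g : k) • (ρ g : Matrix (Fin 2) (Fin 2) k)) := by
  obtain ⟨P, hP, hint⟩ := hiso
  obtain ⟨P', hP', hint'⟩ := exists_orth (fun g => sym2Mat (ρ g : Matrix (Fin 2) (Fin 2) k))
    (fun g => sym2Mat (ρ' g : Matrix (Fin 2) (Fin 2) k))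
    (fun g => sym2Mat_disc _ (hdet g)) (fun g => sym2Mat_disc _ (hdet' g)) P hP hint
  obtain ⟨Q, hQ⟩ := exists_sym2_of_orth P' hP'
  have hQu : IsUnit Q := by
    rw [Matrix.isUnit_iff_isUnit_det, isUnit_iff_ne_zero]
    intro h0
    rw [Matrix.det_fin_two] at h0
    have e := congrFun (congrFun hP' 0) 2
    rw [← hQ] at e
    simp [sym2Mat, discForm, Matrix.mul_apply, Fin.sum_univ_succ] at e
    have : (2 : k) = 0 := by
      linear_combination 2 * (Q 0 0 * Q 1 1 - Q 0 1 * Q 1 0) * h0 + e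
    exact two_ne_zero this
  obtain ⟨W, hW⟩ := hQu
  have hQi : Q * (↑W⁻¹ : Matrix (Fin 2) (Fin 2) k) = 1 := by rw [← hW]; simp
  have hiQ : (↑W⁻¹ : Matrix (Fin 2) (Fin 2) k) * Q = 1 := by rw [← hW]; simp
  have hRu : IsUnit (↑W⁻¹ : Matrix (Fin 2) (Fin 2) k) := ⟨W⁻¹, rfl⟩
  generalize (↑W⁻¹ : Matrix (Fin 2) (Fin 2) k) = R at *
  have hex : ∀ g : G, ∃ c : kˣ, c * c = 1 ∧ (ρ' g : Matrix (Fin 2) (Fin 2) k) * R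
      = R * ((c : k) • (ρ g : Matrix (Fin 2) (Fin 2) k)) := by
    intro g
    have hi : (ρ g : Matrix (Fin 2) (Fin 2) k) * (ρ g⁻¹ : Matrix (Fin 2) (Fin 2) k) = 1 := by
      rw [← Units.val_mul, ← map_mul]; simp
    have hi' : (ρ g⁻¹ : Matrix (Fin 2) (Fin 2) k) * (ρ g : Matrix (Fin 2) (Fin 2) k) = 1 := by
      rw [← Units.val_mul, ← map_mul]; simp
    have h1 := hint' g
    simp only [← hQ] at h1
    obtain ⟨c, hc, hZ⟩ := sym2Mat_eq_one
      (Q * (ρ' g : Matrix (Fin 2) (Fin 2) k) * R * (ρ g⁻¹ : Matrix (Fin 2) (Fin 2) k)) (by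
        rw [sym2Mat_mul, sym2Mat_mul, sym2Mat_mul, ← h1, mul_assoc (sym2Mat _) (sym2Mat Q),
          ← sym2Mat_mul, hQi, sym2Mat_one, mul_one, ← sym2Mat_mul, hi, sym2Mat_one])
    refine ⟨c, hc, ?_⟩
    generalize (ρ g⁻¹ : Matrix (Fin 2) (Fin 2) k) = M at *
    generalize (ρ g : Matrix (Fin 2) (Fin 2) k) = N at *
    generalize (ρ' g : Matrix (Fin 2) (Fin 2) k) = N' at *
    calc N' * R = (R * Q) * N' * R * (M * N) := by rw [hiQ, hi', one_mul, mul_one]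
      _ = R * (Q * N' * R * M) * N := by noncomm_ring
      _ = R * ((c : k) • N) := by rw [hZ]; simp
  choose χ hχ hχ' using hex
  refine ⟨MonoidHom.mk' χ ?_, hχ, R, hRu, hχ'⟩
  intro g h
  have e := hχ' (g * h)
  simp only [map_mul, Units.val_mul] at e
  rw [mul_assoc, hχ' h, ← mul_assoc, ] at e
  have e2 : R * ((χ g * χ h : k) • ((ρ g : Matrix (Fin 2) (Fin 2) k) * (ρ h : Matrix (Fin 2) (Fin 2) k)))
      = R * ((χ (g * h) : k) • ((ρ g : Matrix (Fin 2) (Fin 2) k) * (ρ h : Matrix (Fin 2) (Fin 2) k))) := by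
    rw [← e, hχ' g]
    simp [mul_assoc, smul_smul, mul_comm]
  have e3 := hRu.mul_left_cancel e2
  have e4 := congrArg (fun M => M * (((ρ g * ρ h)⁻¹ : Matrix.GeneralLinearGroup (Fin 2) k) : Matrix (Fin 2) (Fin 2) k)) e3
  simp only [← Units.val_mul, smul_mul_assoc, mul_inv_cancel] at e4
  have e5 := congrFun (congrFun e4 0) 0
  ext
  simpa using e5.symm
end

section
/- Let $V$ be an $r$-dimensional vector space over a field $k$, let $N\colon V \to V$ be nilpotent with $N^{r-1} \neq 0$, let $\Phi\colon V \to V$ be an invertible linear map, and let $q \in k$ satisfy $N \circ \Phi = q \cdot (\Phi \circ N)$. Suppose there is a nonzero vector $v \in \ker N$ with $\Phi v = \zeta v$ for some $\zeta \in k$. Then $\det \Phi = \zeta^r \, q^{r(r-1)/2}$. -/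
lemma aux_li {k V : Type*} [Field k] [AddCommGroup V] [Module k V] {r : ℕ}
    (N : V →ₗ[k] V) (hN : N ^ r = 0) (w : V) (hw : (N ^ (r - 1)) w ≠ 0) :
    LinearIndependent k (fun i : Fin r => (N ^ (i : ℕ)) w) := by
  rw [Fintype.linearIndependent_iff]
  intro g hg
  have key : ∀ n : ℕ, ∀ hn : n < r, g ⟨n, hn⟩ = 0 := by
    intro n
    induction n using Nat.strong_induction_on with
    | _ n ih =>
      intro hn
      have h1 := congrArg (N ^ (r - 1 - n)) hg
      rw [map_sum, map_zero, Finset.sum_eq_single (⟨n, hn⟩ : Fin r)] at h1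
      · rw [map_smul, ← Module.End.mul_apply, ← pow_add] at h1
        have h2 : r - 1 - n + n = r - 1 := by omega
        simp only [h2] at h1
        exact (smul_eq_zero.mp h1).resolve_right hw
      · intro j _ hj
        have hj' : (j : ℕ) ≠ n := fun e => hj (Fin.ext e)
        rcases lt_or_gt_of_ne hj' with hlt | hgt
        · rw [ih j hlt j.2]; simp
        · rw [map_smul, ← Module.End.mul_apply, ← pow_add,
            pow_eq_zero_of_le (show r ≤ r - 1 - n + j by omega) hN]
          simp
      · simp
  exact fun i => key i i.2

lemma aux_repr {k V : Type*} [Field k] [AddCommGroup V] [Module k V] {r : ℕ}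
    (N : V →ₗ[k] V) (hN : N ^ r = 0) (w : V) (b : Module.Basis (Fin r) k V)
    (hb : ∀ i, b i = (N ^ (i : ℕ)) w) (i : ℕ) (x : V) (l : Fin r) :
    b.repr ((N ^ i) x) l =
      if i ≤ l then b.repr x ⟨l - i, lt_of_le_of_lt (Nat.sub_le _ _) l.2⟩ else 0 := by
  have hNb : ∀ j, b.repr ((N ^ i) (b j)) l = if i + (j : ℕ) = l then 1 else 0 := by
    intro j
    rw [hb, ← Module.End.mul_apply, ← pow_add]
    by_cases hlt : i + (j : ℕ) < r
    · have := hb ⟨i + j, hlt⟩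
      simp only at this
      rw [← this, Module.Basis.repr_self, Finsupp.single_apply]
      simp [Fin.ext_iff]
    · rw [pow_eq_zero_of_le (not_lt.mp hlt) hN, if_neg (by omega)]
      simp
  conv_lhs => rw [← b.sum_repr x]
  simp only [map_sum, map_smul, Finsupp.coe_finsetSum, Finset.sum_apply, Finsupp.smul_apply,
    hNb, smul_eq_mul]
  split_ifs with hil
  · rw [Finset.sum_eq_single (⟨l - i, lt_of_le_of_lt (Nat.sub_le _ _) l.2⟩ : Fin r)]
    · rw [if_pos (by simp only; omega), mul_one]
    · intro j _ hj
      rw [if_neg, mul_zero]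
      intro e
      exact hj (Fin.ext (by simp only; omega))
    · simp
  · apply Finset.sum_eq_zero
    intro j _
    rw [if_neg (by omega), mul_zero]

/-- If `N` is a maximal Jordan block nilpotent on an `r`-dimensional space, `Φ` is invertible
with `N ∘ Φ = q • (Φ ∘ N)`, and `Φ` acts on the line `ker N` by the scalar `ζ`, then
`det Φ = ζ ^ r * q ^ (r (r - 1) / 2)`. -/
theorem stmt_9 {k V : Type*} [Field k] [AddCommGroup V] [Module k V]
    [FiniteDimensional k V] {r : ℕ} (hdim : Module.finrank k V = r)
    (N Φ : V →ₗ[k] V) (hnil : IsNilpotent N) (hmax : N ^ (r - 1) ≠ 0)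
    (hΦ : Function.Bijective Φ) (q : k) (h : N ∘ₗ Φ = q • (Φ ∘ₗ N))
    (v : V) (hv0 : v ≠ 0) (hvker : v ∈ LinearMap.ker N) (ζ : k) (hζ : Φ v = ζ • v) :
    LinearMap.det Φ = ζ ^ r * q ^ (r * (r - 1) / 2) := by
  have hNr : N ^ r = 0 := by
    rw [← hdim]
    obtain ⟨m, hm⟩ := hnil
    ext x
    have hx : x ∈ LinearMap.ker (N ^ m) := by rw [hm]; simp
    exact LinearMap.mem_ker.mp (Module.End.ker_pow_le_ker_pow_finrank N m hx)
  obtain ⟨w, hw⟩ : ∃ w, (N ^ (r - 1)) w ≠ 0 := by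
    by_contra! hc
    exact hmax (LinearMap.ext hc)
  have : Nontrivial V := ⟨v, 0, hv0⟩
  have hr : 0 < r := hdim ▸ Module.finrank_pos
  have : Nonempty (Fin r) := ⟨⟨0, hr⟩⟩
  let b := basisOfLinearIndependentOfCardEqFinrank (aux_li N hNr w hw) (by simp [hdim])
  have hb : ∀ i, b i = (N ^ (i : ℕ)) w := by intro i; simp [b]
  have hrep := aux_repr N hNr w b hb
  have hcomm : ∀ (i : ℕ) (x : V), (N ^ i) (Φ x) = q ^ i • Φ ((N ^ i) x) := by
    intro i
    induction i with
    | zero => simp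
    | succ i ih =>
      intro x
      have h1 : N (Φ x) = q • Φ (N x) := LinearMap.congr_fun h x
      rw [pow_succ, Module.End.mul_apply, Module.End.mul_apply, h1, map_smul, ih, smul_smul,
        pow_succ, mul_comm]
  have hq : ∀ i, i < r → q ^ i ≠ 0 := by
    intro i hi h0
    have hi0 : i ≠ 0 := by rintro rfl; simp at h0
    have hN0 : N ^ i = 0 := by
      ext x
      obtain ⟨y, rfl⟩ := hΦ.2 x
      rw [hcomm, h0]; simp
    exact hmax (pow_eq_zero_of_le (by omega) hN0)
  let z : Fin r := ⟨r - 1, by omega⟩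
  have hv : v = b.repr v z • b z := by
    conv_lhs => rw [← b.sum_repr v]
    apply Finset.sum_eq_single z
    · intro j _ hj
      have hj' : (j : ℕ) ≠ r - 1 := fun e => hj (Fin.ext e)
      have hj2 := j.2
      have h1 := hrep 1 v ⟨j + 1, by omega⟩
      rw [pow_one, LinearMap.mem_ker.mp hvker] at h1
      simp at h1
      rw [← h1, zero_smul]
    · simp
  have hc : b.repr v z ≠ 0 := by
    intro h0
    rw [h0, zero_smul] at hv
    exact hv0 hv
  have hz : Φ (b z) = ζ • b z := by
    rw [hv, map_smul, smul_comm] at hζ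
    exact smul_right_injective V hc hζ
  have hw0 : b.repr (Φ w) ⟨0, hr⟩ = q ^ (r - 1) * ζ := by
    have h1 := hrep (r - 1) (Φ w) z
    have h2 : (N ^ (r - 1)) w = b z := (hb z).symm
    rw [hcomm, h2, hz] at h1
    simp [z] at h1
    exact h1.symm
  have hent : ∀ l i : Fin r, q ^ (i : ℕ) * LinearMap.toMatrix b b Φ l i =
      if (i : ℕ) ≤ l then b.repr (Φ w) ⟨l - i, lt_of_le_of_lt (Nat.sub_le _ _) l.2⟩ else 0 := by
    intro l i
    rw [← hrep, hcomm, LinearMap.toMatrix_apply, hb]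
    simp
  have hdiag : ∀ i : Fin r, LinearMap.toMatrix b b Φ i i = q ^ (r - 1 - (i : ℕ)) * ζ := by
    intro i
    apply mul_left_cancel₀ (hq i i.2)
    have hi := i.2
    rw [hent, if_pos le_rfl, ← mul_assoc, ← pow_add]
    simp only [Nat.sub_self, hw0]
    congr 2
    omega
  rw [← LinearMap.det_toMatrix b, Matrix.det_of_lowerTriangular]
  · simp only [hdiag]
    rw [Finset.prod_mul_distrib, Finset.prod_const, Finset.prod_pow_eq_pow_sum,
      Fin.sum_univ_eq_sum_range (fun i => r - 1 - i) r, Finset.sum_range_reflect (fun i => i) r,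
      Finset.sum_range_id]
    simp [mul_comm]
  · intro i j hij
    have hij' : i < j := hij
    have h1 := hent i j
    rw [if_neg (by simpa using hij')] at h1
    exact (mul_eq_zero.mp h1).resolve_left (hq j j.2)
end

section
/- Let $V$ be an $r$-dimensional vector space over a field $k$, let $N\colon V \to V$ be nilpotent with $N^{r-1} \neq 0$, let $\Phi\colon V \to V$ be an invertible linear map, and let $q \in k$ satisfy $N \circ \Phi = q \cdot (\Phi \circ N)$. Suppose there is a nonzero vector $v \in \ker N$ with $\Phi v = \zeta v$ for some $\zeta \in k$. Then the characteristic polynomial of $\Phi$ equals $\prod_{j=0}^{r-1} (X - q^j \zeta)$. -/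
theorem chain_linInd {k V : Type*} [Field k] [AddCommGroup V] [Module k V]
    (N : V →ₗ[k] V) (b : ℕ → V) (h0 : N (b 0) = 0) (hb0 : b 0 ≠ 0) (m : ℕ)
    (hs : ∀ j, j + 1 < m → N (b (j + 1)) = b j) :
    LinearIndependent k (fun i : Fin m => b i) := by
  induction m with
  | zero => exact linearIndependent_empty_type
  | succ m ih =>
    have ih := ih (fun j hj => hs j (by omega))
    rw [Fintype.linearIndependent_iff] at ih ⊢
    intro g hg
    rw [Fin.sum_univ_succ] at hg
    have h1 := congrArg N hg
    simp only [map_add, map_sum, map_smul, map_zero, Fin.val_succ, Fin.val_zero, h0, smul_zero,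
      zero_add] at h1
    have h2 := ih (fun i => g i.succ) (by
      rw [← h1]
      refine Finset.sum_congr rfl fun i _ => ?_
      rw [hs i (by omega)])
    simp only [h2, zero_smul, Finset.sum_const_zero, add_zero, smul_eq_zero] at hg
    intro i
    refine Fin.cases ?_ h2 i
    exact hg.resolve_right hb0

/-- If `N` is a maximal Jordan block nilpotent on an `r`-dimensional space, `Φ` is invertible
with `N ∘ Φ = q • (Φ ∘ N)`, and `Φ` acts on the line `ker N` by the scalar `ζ`, then the
characteristic polynomial of `Φ` is `∏ j = 0, ..., r-1, (X - q^j ζ)`. -/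
theorem stmt_10 {k V : Type*} [Field k] [AddCommGroup V] [Module k V]
    [FiniteDimensional k V] {r : ℕ} (hdim : Module.finrank k V = r)
    (N Φ : V →ₗ[k] V) (hnil : IsNilpotent N) (hmax : N ^ (r - 1) ≠ 0)
    (hΦ : Function.Bijective Φ) (q : k) (h : N ∘ₗ Φ = q • (Φ ∘ₗ N))
    (v : V) (hv0 : v ≠ 0) (hvker : v ∈ LinearMap.ker N) (ζ : k) (hζ : Φ v = ζ • v) :
    LinearMap.charpoly Φ = ∏ j ∈ Finset.range r, (Polynomial.X - Polynomial.C (q ^ j * ζ)) := by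
  obtain _ | n := r
  · have := Module.finrank_zero_iff.mp hdim
    exact absurd (Subsingleton.elim v 0) hv0
  rw [Nat.add_sub_cancel] at hmax
  obtain ⟨w, hw⟩ : ∃ w, (N ^ n) w ≠ 0 := by
    by_contra! hc
    exact hmax (LinearMap.ext hc)
  have hpow : ∀ u, (N ^ (n + 1)) u = 0 := by
    intro u
    obtain ⟨m, hm⟩ := hnil
    have := Module.End.ker_pow_le_ker_pow_finrank N m
    rw [hdim, hm] at this
    exact this (by simp)
  let e : ℕ → V := fun j => (N ^ (n - j)) w
  have he0 : N (e 0) = 0 := by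
    have := hpow w
    rwa [pow_succ', Module.End.mul_apply] at this
  have hes : ∀ j, j + 1 < n + 1 → N (e (j + 1)) = e j := by
    intro j hj
    change N ((N ^ (n - (j + 1))) w) = (N ^ (n - j)) w
    rw [← Module.End.mul_apply, ← pow_succ']
    congr 2
    omega
  have hli := chain_linInd N e he0 hw (n + 1) hes
  let b := basisOfLinearIndependentOfCardEqFinrank hli (by simp [hdim])
  have hb : ∀ i, b i = e i := fun i => by
    simp [b]
  -- coordinates of `N u`
  have hN : ∀ (i : Fin n) (u : V), b.repr (N u) i.castSucc = b.repr u i.succ := by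
    intro i u
    have : b.coord i.castSucc ∘ₗ N = b.coord i.succ := by
      refine b.ext fun j => ?_
      refine Fin.cases ?_ (fun j => ?_) j
      · have : N (b 0) = 0 := by rw [hb]; exact he0
        simp [this, Finsupp.single_apply, (Fin.succ_ne_zero i).symm]
      · have : N (b j.succ) = b j.castSucc := by
          rw [hb, hb, Fin.val_succ, hes _ (by omega), Fin.val_castSucc]
        simp [this, Finsupp.single_apply]
    exact LinearMap.congr_fun this u
  have hb0 : N (b 0) = 0 := by rw [hb]; exact he0
  have hbs : ∀ j : Fin n, N (b j.succ) = b j.castSucc := fun j => by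
    rw [hb, hb, Fin.val_succ, hes _ (by omega), Fin.val_castSucc]
  have hh : ∀ u, N (Φ u) = q • Φ (N u) := fun u => LinearMap.congr_fun h u
  have hc0 : ∀ i : Fin n, b.repr (Φ (b 0)) i.succ = 0 := fun i => by
    rw [← hN, hh, hb0]; simp
  have hcs : ∀ i j : Fin n, b.repr (Φ (b j.succ)) i.succ
      = q * b.repr (Φ (b j.castSucc)) i.castSucc := fun i j => by
    rw [← hN, hh, hbs]; simp
  have hv : v = b.repr v 0 • b 0 := by
    conv_lhs => rw [← b.sum_repr v, Fin.sum_univ_succ]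
    rw [add_eq_left]
    refine Finset.sum_eq_zero fun i _ => ?_
    rw [← hN, LinearMap.mem_ker.mp hvker]; simp
  have hx : b.repr v 0 ≠ 0 := fun hx => hv0 (by rw [hv, hx, zero_smul])
  have hζ0 : Φ (b 0) = ζ • b 0 := by
    rw [hv, map_smul, smul_comm] at hζ
    exact smul_right_injective V hx hζ
  have hdiag : ∀ (m : ℕ) (hm : m < n + 1), b.repr (Φ (b ⟨m, hm⟩)) ⟨m, hm⟩ = q ^ m * ζ := by
    intro m
    induction m with
    | zero => intro hm; change b.repr (Φ (b 0)) 0 = _; rw [hζ0]; simp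
    | succ m ih =>
      intro hm
      have := hcs ⟨m, by omega⟩ ⟨m, by omega⟩
      refine this.trans ?_
      have h2 := ih (by omega)
      rw [pow_succ', mul_assoc, ← h2]; rfl
  have htri : ∀ (m l : ℕ) (hm : m < n + 1) (hl : l < n + 1), m < l →
      b.repr (Φ (b ⟨m, hm⟩)) ⟨l, hl⟩ = 0 := by
    intro m
    induction m with
    | zero =>
      intro l hm hl hlt
      obtain _ | l := l
      · omega
      · exact hc0 ⟨l, by omega⟩
    | succ m ih =>
      intro l hm hl hlt
      obtain _ | l := l
      · omega
      · refine (hcs ⟨l, by omega⟩ ⟨m, by omega⟩).trans ?_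
        have h2 := ih l (by omega) (by omega) (by omega)
        exact mul_eq_zero_of_right _ h2
  rw [← LinearMap.charpoly_toMatrix Φ b, Matrix.charpoly_of_upperTriangular, Finset.prod_range]
  · refine Finset.prod_congr rfl fun i _ => ?_
    rw [LinearMap.toMatrix_apply, hdiag i i.2]
  · intro i j hij
    rw [LinearMap.toMatrix_apply]
    exact htri j i j.2 i.2 hij
end
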